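/- Let n ≥ 1, T ≥ 1, and let f : ℝ → Matrix (Fin T) (Fin T) ℂ be measurable, integrable on [−π, π), with f(λ) Hermitian positive semidefinite for almost every λ. For μ ∈ ℤ define G_μ(λ) = (1 − e^{−iμλ})^n / (iλ)^n for λ ≠ 0 and G_μ(0) = μ^n, and define the matrix-valued kernel D(m; μ₁, μ₂) = ∫_{−π}^{π} e^{iλm} G_{μ₁}(λ) conj(G_{μ₂}(λ)) f(λ) dλ. Then for every r ∈ ℕ, every m₁, …, m_r ∈ ℤ, μ₁, …, μ_r ∈ ℤ and every choice of vectors c₁, …, c_r ∈ ℂ^T, the sum Σ_{j=1}^{r} Σ_{k=1}^{r} c_j^* · D(m_j − m_k; μ_j, μ_k) · c_k is a nonnegative real number (here c^* denotes conjugate transpose). -/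

import Mathlib

open MeasureTheory
open scoped ComplexOrder

/-- The function `G_μ(λ) = (1 − e^{−iμλ})^n / (iλ)^n`, extended continuously by
`G_μ(0) = μ^n`. -/
noncomputable def Gker (n : ℕ) (μ : ℤ) (lam : ℝ) : ℂ :=
  if lam = 0 then (μ : ℂ) ^ n
  else (1 - Complex.exp (-Complex.I * (μ : ℂ) * (lam : ℂ))) ^ n / (Complex.I * (lam : ℂ)) ^ n

/-- Bound on the kernel. -/
theorem Gker_norm_le (n : ℕ) (μ : ℤ) (lam : ℝ) : ‖Gker n μ lam‖ ≤ |(μ : ℝ)| ^ n := by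
  unfold Gker
  split_ifs with h
  · rw [norm_pow]
    simp
  · rw [← div_pow, norm_pow]
    refine pow_le_pow_left₀ (norm_nonneg _) ?_ n
    have h1 := Real.norm_exp_I_mul_ofReal_sub_one_le (x := -((μ : ℝ) * lam))
    have h2 : Complex.exp (-Complex.I * (μ : ℂ) * (lam : ℂ))
        = Complex.exp (Complex.I * ((-((μ : ℝ) * lam) : ℝ) : ℂ)) := by
      congr 1
      push_cast
      ring
    rw [h2, norm_div, norm_sub_rev, div_le_iff₀ (by simpa using h)]
    refine h1.trans (le_of_eq ?_)
    simp [abs_mul]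

theorem Gker_measurable (n : ℕ) (μ : ℤ) : Measurable (Gker n μ) := by
  unfold Gker
  refine Measurable.ite (measurableSet_singleton 0) measurable_const ?_
  fun_prop

theorem weight_integrable (n : ℕ) (m μ₁ μ₂ : ℤ) (g : ℝ → ℂ) (s : Set ℝ)
    (hg : IntegrableOn g s) :
    IntegrableOn (fun lam : ℝ => Complex.exp (Complex.I * (lam : ℂ) * (m : ℂ)) * Gker n μ₁ lam
          * (starRingEnd ℂ) (Gker n μ₂ lam) * g lam) s := by
  have hG1 := Gker_measurable n μ₁
  have hG2 := Gker_measurable n μ₂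
  refine Integrable.bdd_mul (c := |(μ₁ : ℝ)| ^ n * |(μ₂ : ℝ)| ^ n) hg ?_ ?_
  · refine Measurable.aestronglyMeasurable ?_
    have : Measurable fun lam : ℝ => (starRingEnd ℂ) (Gker n μ₂ lam) :=
      Complex.continuous_conj.measurable.comp hG2
    fun_prop
  · refine Filter.Eventually.of_forall fun lam => ?_
    have he : ‖Complex.exp (Complex.I * (lam : ℂ) * (m : ℂ))‖ = 1 := by
      have : Complex.I * (lam : ℂ) * (m : ℂ) = Complex.I * ((lam * m : ℝ) : ℂ) := by
        push_cast
        ring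
      rw [this, Complex.norm_exp_I_mul_ofReal]
    rw [norm_mul, norm_mul, he, one_mul, RCLike.norm_conj]
    exact mul_le_mul (Gker_norm_le n μ₁ lam) (Gker_norm_le n μ₂ lam) (norm_nonneg _)
      (by positivity)

/-- for a measurable, integrable, a.e. Hermitian positive semidefinite matrix
spectral density `f` on `[−π, π)`, the matrix kernel
`D(m; μ₁, μ₂) = ∫_{−π}^{π} e^{iλm} G_{μ₁}(λ) conj(G_{μ₂}(λ)) f(λ) dλ`
is positive semidefinite: every sum `Σ_j Σ_k c_j^* D(m_j − m_k; μ_j, μ_k) c_k`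
is a nonnegative real number. -/
theorem matrix_structural_kernel_posSemidef (n T : ℕ) (hn : 1 ≤ n) (hT : 1 ≤ T)
    (f : ℝ → Matrix (Fin T) (Fin T) ℂ)
    (hmeas : ∀ i j, Measurable fun lam => f lam i j)
    (hint : ∀ i j, IntegrableOn (fun lam => f lam i j) (Set.Ico (-Real.pi) Real.pi))
    (hpsd : ∀ᵐ lam ∂(volume.restrict (Set.Ico (-Real.pi) Real.pi)), (f lam).PosSemidef)
    (D : ℤ → ℤ → ℤ → Matrix (Fin T) (Fin T) ℂ)
    (hD : ∀ (m μ₁ μ₂ : ℤ) (i j : Fin T), D m μ₁ μ₂ i j =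
      ∫ lam in Set.Ico (-Real.pi) Real.pi,
        Complex.exp (Complex.I * (lam : ℂ) * (m : ℂ)) * Gker n μ₁ lam
          * (starRingEnd ℂ) (Gker n μ₂ lam) * f lam i j)
    (r : ℕ) (m μ : Fin r → ℤ) (c : Fin r → Fin T → ℂ) :
    0 ≤ (∑ j, ∑ k,
          dotProduct (star (c j)) ((D (m j - m k) (μ j) (μ k)).mulVec (c k))).re ∧
      (∑ j, ∑ k,
          dotProduct (star (c j)) ((D (m j - m k) (μ j) (μ k)).mulVec (c k))).im = 0 := by
  suffices h : 0 ≤ (∑ j, ∑ k,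
      dotProduct (star (c j)) ((D (m j - m k) (μ j) (μ k)).mulVec (c k))) by
    rw [Complex.le_def] at h
    exact ⟨h.1, h.2.symm⟩
  have key : (∑ j, ∑ k,
      dotProduct (star (c j)) ((D (m j - m k) (μ j) (μ k)).mulVec (c k)))
      = ∫ lam in Set.Ico (-Real.pi) Real.pi, ∑ j, ∑ k, ∑ a, ∑ b,
        star (c j a) * c k b *
        (Complex.exp (Complex.I * (lam : ℂ) * ((m j - m k : ℤ) : ℂ)) * Gker n (μ j) lam
          * (starRingEnd ℂ) (Gker n (μ k) lam) * f lam a b) := by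
    have hi : ∀ j k a b, IntegrableOn (fun lam : ℝ => star (c j a) * c k b *
        (Complex.exp (Complex.I * (lam : ℂ) * ((m j - m k : ℤ) : ℂ)) * Gker n (μ j) lam
          * (starRingEnd ℂ) (Gker n (μ k) lam) * f lam a b)) (Set.Ico (-Real.pi) Real.pi) :=
      fun j k a b => (weight_integrable n _ _ _ _ _ (hint a b)).const_mul _
    rw [integral_finsetSum _ fun j _ => integrable_finsetSum _ fun k _ =>
      integrable_finsetSum _ fun a _ => integrable_finsetSum _ fun b _ => hi j k a b]
    refine Finset.sum_congr rfl fun j _ => ?_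
    rw [integral_finsetSum _ fun k _ =>
      integrable_finsetSum _ fun a _ => integrable_finsetSum _ fun b _ => hi j k a b]
    refine Finset.sum_congr rfl fun k _ => ?_
    rw [integral_finsetSum _ fun a _ => integrable_finsetSum _ fun b _ => hi j k a b]
    refine Finset.sum_congr rfl fun a _ => ?_
    rw [integral_finsetSum _ fun b _ => hi j k a b]
    rw [Matrix.mulVec, dotProduct, Finset.mul_sum]
    refine Finset.sum_congr rfl fun b _ => ?_
    rw [integral_const_mul, ← hD, Pi.star_apply]
    ring
  rw [key]
  refine integral_nonneg_of_ae ?_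
  filter_upwards [hpsd] with lam hl
  have hw := hl.dotProduct_mulVec_nonneg (fun a => ∑ k,
    (starRingEnd ℂ) (Complex.exp (Complex.I * (lam : ℂ) * (m k : ℂ)) * Gker n (μ k) lam) * c k a)
  refine hw.trans (le_of_eq ?_)
  have hexp : ∀ j k, Complex.exp (Complex.I * (lam : ℂ) * ((m j - m k : ℤ) : ℂ))
      = Complex.exp (Complex.I * (lam : ℂ) * (m j : ℂ)) *
        (starRingEnd ℂ) (Complex.exp (Complex.I * (lam : ℂ) * (m k : ℂ))) := by
    intro j k
    rw [← Complex.exp_conj, ← Complex.exp_add]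
    congr 1
    simp
    ring
  have h1 : ∀ j k, (∑ a, ∑ b, star (c j a) * c k b *
        (Complex.exp (Complex.I * (lam : ℂ) * ((m j - m k : ℤ) : ℂ)) * Gker n (μ j) lam
          * (starRingEnd ℂ) (Gker n (μ k) lam) * f lam a b))
      = dotProduct (star fun a => (starRingEnd ℂ)
          (Complex.exp (Complex.I * (lam : ℂ) * (m j : ℂ)) * Gker n (μ j) lam) * c j a)
        ((f lam).mulVec fun a => (starRingEnd ℂ)
          (Complex.exp (Complex.I * (lam : ℂ) * (m k : ℂ)) * Gker n (μ k) lam) * c k a) := by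
    intro j k
    simp only [Matrix.mulVec, dotProduct, Finset.mul_sum, hexp, Pi.star_apply, star_mul',
      RCLike.star_def, map_mul, RingHomCompTriple.comp_apply, RingHom.id_apply, Complex.conj_conj]
    refine Finset.sum_congr rfl fun a _ => Finset.sum_congr rfl fun b _ => ?_
    ring
  have h2 : (fun a => ∑ k, (starRingEnd ℂ)
      (Complex.exp (Complex.I * (lam : ℂ) * (m k : ℂ)) * Gker n (μ k) lam) * c k a)
      = ∑ k, fun a => (starRingEnd ℂ)
      (Complex.exp (Complex.I * (lam : ℂ) * (m k : ℂ)) * Gker n (μ k) lam) * c k a := by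
    ext a
    simp [Finset.sum_apply]
  simp only [h1]
  rw [h2, star_sum, sum_dotProduct]
  refine Finset.sum_congr rfl fun j _ => ?_
  rw [Matrix.mulVec_sum, dotProduct_sum]
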